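/- arXiv:2012.04300 — 5 statements merged into one kernel-verified Lean document; each statement's English description precedes it below -/
import Mathlib

section
/- Double recursion theorem: for every partial combinatory algebra A there exist elements g, h ∈ A such that for all a, b, c ∈ A: gab is defined, hab is defined, gabc ≃ a(hab)c, and habc ≃ b(gab)c. -/
/-!
Combinatory completeness turns every term with variables into an element of the algebra, so
recursive equations can be solved by self-application: to solve `gᵢ v ≃ tᵢ(g₁, …, gₖ, v)` for
`i = 1, …, k` at once, where `v` is a tuple of arguments, choose elements `xᵢ` with
`xᵢ y₁ ⋯ yₖ v ≃ tᵢ(y₁ y₁ ⋯ yₖ, …, yₖ y₁ ⋯ yₖ, v)` and put `gᵢ = xᵢ x₁ ⋯ xₖ`. The double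
recursion theorem is the case of the two terms `a (h a b) c` and `b (g a b) c`.
-/

universe u

/-- A partial combinatory algebra: a set with at least two elements, a partial
binary application, and combinators `k`, `s` with `ka↓`, `sa↓`, `sab↓`,
`kab ≃ a` and `sabc ≃ ac(bc)`. -/
structure PCA (A : Type u) where
  app : A → A → Part A
  k : A
  s : A
  nontrivial : ∃ a b : A, a ≠ b
  k_def : ∀ a : A, (app k a).Dom
  s_def : ∀ a : A, (app s a).Dom
  s_app_def : ∀ a b : A, ((app s a).bind fun x => app x b).Dom
  k_spec : ∀ a b : A, ((app k a).bind fun x => app x b) = Part.some a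
  s_spec : ∀ a b c : A,
    (((app s a).bind fun x => app x b).bind fun x => app x c)
      = (app a c).bind fun u => (app b c).bind fun v => app u v

namespace PCA
variable {A : Type u} (P : PCA A)

/-- Apply a possibly undefined value to an element of `A` (left association). -/
def apl (x : Part A) (b : A) : Part A := x.bind fun a => P.app a b

end PCA

namespace PCA

universe v w

variable {A : Type u} {α : Type v} {β : Type w}

/-- Formal applicative expressions over a pca with carrier `A`, with variables indexed by `α`. -/
inductive Term (A : Type u) (α : Type v) : Type (max u v)
  | var : α → Term A α
  | const : A → Term A α
  | app : Term A α → Term A α → Term A α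

namespace Term

/-- Simultaneous substitution of terms for variables. -/
def subst (σ : α → Term A β) : Term A α → Term A β
  | var x => σ x
  | const a => const a
  | app t u => app (t.subst σ) (u.subst σ)

/-- The iterated application `t u₀ ⋯ uₙ₋₁`, associating to the left. -/
def apps (t : Term A α) : {n : ℕ} → (Fin n → Term A α) → Term A α
  | 0, _ => t
  | n + 1, u => app (t.apps (Fin.init u)) (u (Fin.last n))

end Term

variable (P : PCA A)

/-- The partial iterated application `a v₀ ⋯ vₙ₋₁`, associating to the left. -/
def apps (a : A) : {n : ℕ} → (Fin n → A) → Part A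
  | 0, _ => Part.some a
  | n + 1, v => P.apl (apps a (Fin.init v)) (v (Fin.last n))

theorem apps_two (f a b : A) : P.apps f ![a, b] = P.apl (P.app f a) b := by
  simp [apps, apl, Fin.init]

theorem apps_three (f a b c : A) : P.apps f ![a, b, c] = P.apl (P.apl (P.app f a) b) c := by
  simp [apps, apl, Fin.init]

theorem apps_append {m n : ℕ} (a : A) (v : Fin m → A) (w : Fin n → A) :
    P.apps a (Fin.append v w) = (P.apps a v).bind fun b => P.apps b w := by
  induction n with
  | zero => simp [apps, Fin.append_right_nil]
  | succ n ih =>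
    rw [← Fin.snoc_init_self w, Fin.append_snoc]
    simp [apps, apl, ih, Part.bind_assoc]

/-- The partial value of a term under an assignment of elements to its variables. -/
def eval (ρ : α → A) : Term A α → Part A
  | .var x => Part.some (ρ x)
  | .const a => Part.some a
  | .app t u => (eval ρ t).bind fun a => (eval ρ u).bind fun b => P.app a b

theorem eval_subst {ρ : β → A} {ρ' : α → A} {σ : α → Term A β}
    (hσ : ∀ x, P.eval ρ (σ x) = Part.some (ρ' x)) (t : Term A α) :
    P.eval ρ (t.subst σ) = P.eval ρ' t := by
  induction t with
  | var x => exact hσ x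
  | const a => rfl
  | app t u iht ihu => simp only [Term.subst, eval, iht, ihu]

theorem eval_apps {n : ℕ} {ρ : α → A} {u : Fin n → Term A α} {v : Fin n → A}
    (hu : ∀ i, P.eval ρ (u i) = Part.some (v i)) (t : Term A α) :
    P.eval ρ (t.apps u) = (P.eval ρ t).bind fun a => P.apps a v := by
  induction n with
  | zero => simp [Term.apps, apps]
  | succ n ih =>
    have ih_init := ih (u := Fin.init u) (v := Fin.init v) fun i => hu i.castSucc
    simp [Term.apps, apps, apl, eval, ih_init, hu, Part.bind_assoc]

theorem exists_k_app_eq_some (a : A) :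
    ∃ f, P.app P.k a = Part.some f ∧ ∀ b, P.app f b = Part.some a := by
  obtain ⟨f, hf⟩ := Part.dom_iff_mem.1 (P.k_def a)
  rw [← Part.eq_some_iff] at hf
  exact ⟨f, hf, fun b => by simpa [hf] using P.k_spec a b⟩

theorem exists_s_app_app_eq_some (a b : A) :
    ∃ f, P.apl (P.app P.s a) b = Part.some f ∧
      ∀ c, P.app f c = (P.app a c).bind fun x => (P.app b c).bind fun y => P.app x y := by
  obtain ⟨f, hf⟩ := Part.dom_iff_mem.1 (P.s_app_def a b)
  rw [← Part.eq_some_iff] at hf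
  exact ⟨f, hf, fun c => by simpa only [hf, Part.bind_some] using P.s_spec a b c⟩

/-- Bracket abstraction `λ* x. t` of the last variable `x` of `t`, where `λ* x. x = s k k`.
Applications are always abstracted with `s`, even when `x` does not occur in them, so that `λ* x. t`
is defined whether or not `t` is. -/
def abs {n : ℕ} : Term A (Fin (n + 1)) → Term A (Fin n)
  | .var i =>
    Fin.lastCases (.app (.app (.const P.s) (.const P.k)) (.const P.k))
      (fun j => .app (.const P.k) (.var j)) i
  | .const a => .app (.const P.k) (.const a)
  | .app t u => .app (.app (.const P.s) (abs t)) (abs u)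

theorem exists_eval_abs_eq_some {n : ℕ} (t : Term A (Fin (n + 1))) (v : Fin n → A) :
    ∃ f, P.eval v (P.abs t) = Part.some f ∧
      ∀ a, P.app f a = P.eval (Fin.snoc v a : Fin (n + 1) → A) t := by
  induction t with
  | var i =>
    cases i using Fin.lastCases with
    | last =>
      obtain ⟨f, hf, hf_app⟩ := P.exists_s_app_app_eq_some P.k P.k
      refine ⟨f, by simpa [abs, eval, apl] using hf, fun a => ?_⟩
      obtain ⟨ka, hka, hka_app⟩ := P.exists_k_app_eq_some a
      simp [hf_app, hka, hka_app, eval]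
    | cast j =>
      obtain ⟨f, hf, hf_app⟩ := P.exists_k_app_eq_some (v j)
      exact ⟨f, by simpa [abs, eval] using hf, fun a => by simp [hf_app, eval]⟩
  | const b =>
    obtain ⟨f, hf, hf_app⟩ := P.exists_k_app_eq_some b
    exact ⟨f, by simpa [abs, eval] using hf, fun a => by simp [hf_app, eval]⟩
  | app t u iht ihu =>
    obtain ⟨x, hx, hx_app⟩ := iht
    obtain ⟨y, hy, hy_app⟩ := ihu
    obtain ⟨f, hf, hf_app⟩ := P.exists_s_app_app_eq_some x y
    exact ⟨f, by simpa [abs, eval, apl, hx, hy] using hf,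
      fun a => by simp only [hf_app, hx_app, hy_app, eval]⟩

theorem eval_abs_dom {n : ℕ} (t : Term A (Fin (n + 1))) (v : Fin n → A) :
    (P.eval v (P.abs t)).Dom := by
  obtain ⟨f, hf, -⟩ := P.exists_eval_abs_eq_some t v
  simp [hf]

theorem apl_eval_abs {n : ℕ} (t : Term A (Fin (n + 1))) (v : Fin (n + 1) → A) :
    P.apl (P.eval (Fin.init v) (P.abs t)) (v (Fin.last n)) = P.eval v t := by
  obtain ⟨f, hf, hf_app⟩ := P.exists_eval_abs_eq_some t (Fin.init v)
  simp [apl, hf, hf_app]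

theorem combinatory_completeness {n : ℕ} (t : Term A (Fin (n + 1))) :
    ∃ f, (∀ v : Fin n → A, (P.apps f v).Dom) ∧
      ∀ v : Fin (n + 1) → A, P.apps f v = P.eval v t := by
  induction n with
  | zero =>
    obtain ⟨f, hf, -⟩ := P.exists_eval_abs_eq_some t Fin.elim0
    refine ⟨f, fun _ => trivial, fun v => ?_⟩
    rw [← P.apl_eval_abs t v, Subsingleton.elim (Fin.init v) Fin.elim0, hf]
    rfl
  | succ n ih =>
    obtain ⟨f, -, hf⟩ := ih (P.abs t)
    exact ⟨f, fun v => by simpa only [hf] using P.eval_abs_dom t v,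
      fun v => by rw [apps, hf, apl_eval_abs]⟩

theorem simultaneous_recursion {k n : ℕ} (t : Fin k → Term A (Fin k ⊕ Fin (n + 1))) :
    ∃ g : Fin k → A, ∀ i, (∀ v : Fin n → A, (P.apps (g i) v).Dom) ∧
      ∀ v : Fin (n + 1) → A, P.apps (g i) v = P.eval (Sum.elim g v) (t i) := by
  let y (j : Fin k) : Term A (Fin (k + n + 1)) := .var (Fin.castAdd (n + 1) j)
  let σ : Fin k ⊕ Fin (n + 1) → Term A (Fin (k + n + 1)) :=
    Sum.elim (fun j => (y j).apps y) fun l => .var (Fin.natAdd k l)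
  choose x hx_dom hx using fun i => P.combinatory_completeness ((t i).subst σ)
  have x_apps_x_dom (i : Fin k) : (P.apps (x i) x).Dom := by
    -- A prefix of a defined iterated application is defined; the last `n` arguments are arbitrary.
    have h := hx_dom i (Fin.append x fun _ => P.k)
    rw [apps_append] at h
    exact h.fst
  choose g hg using fun i => Part.dom_iff_mem.1 (x_apps_x_dom i)
  simp only [← Part.eq_some_iff] at hg
  have apps_g {m : ℕ} (i : Fin k) (v : Fin m → A) :
      P.apps (g i) v = P.apps (x i) (Fin.append x v) := by
    rw [apps_append, hg, Part.bind_some]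
  refine ⟨g, fun i => ⟨fun v => by simpa only [apps_g] using hx_dom i _, fun v => ?_⟩⟩
  have eval_σ : ∀ z, P.eval (Fin.append x v) (σ z) = Part.some (Sum.elim g v z) := by
    rintro (j | l)
    · have eval_y (j : Fin k) : P.eval (Fin.append x v) (y j) = Part.some (x j) := by
        simp [y, eval]
      simpa [σ, eval_y, hg] using P.eval_apps eval_y (y j)
    · simp [σ, eval]
  calc P.apps (g i) v = P.apps (x i) (Fin.append x v) := apps_g i v
    _ = P.eval (Fin.append x v) ((t i).subst σ) := hx i _
    _ = P.eval (Sum.elim g v) (t i) := P.eval_subst eval_σ (t i)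

end PCA

/-- **The double recursion theorem**: there are `g, h ∈ A` such that for all
`a, b, c ∈ A`: `gab↓`, `hab↓`, `gabc ≃ a(hab)c` and `habc ≃ b(gab)c`. -/
theorem double_recursion_theorem {A : Type u} (P : PCA A) :
    ∃ g h : A, ∀ a b c : A,
      (P.apl (P.app g a) b).Dom ∧
      (P.apl (P.app h a) b).Dom ∧
      P.apl (P.apl (P.app g a) b) c
        = P.apl ((P.apl (P.app h a) b).bind fun hab => P.app a hab) c ∧
      P.apl (P.apl (P.app h a) b) c
        = P.apl ((P.apl (P.app g a) b).bind fun gab => P.app b gab) c := by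
  let g : PCA.Term A (Fin 2 ⊕ Fin 3) := .var (.inl 0)
  let h : PCA.Term A (Fin 2 ⊕ Fin 3) := .var (.inl 1)
  let a : PCA.Term A (Fin 2 ⊕ Fin 3) := .var (.inr 0)
  let b : PCA.Term A (Fin 2 ⊕ Fin 3) := .var (.inr 1)
  let c : PCA.Term A (Fin 2 ⊕ Fin 3) := .var (.inr 2)
  obtain ⟨f, hf⟩ := P.simultaneous_recursion
    ![(a.app ((h.app a).app b)).app c, (b.app ((g.app a).app b)).app c]
  refine ⟨f 0, f 1, fun a' b' c' => ⟨?_, ?_, ?_, ?_⟩⟩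
  · simpa only [PCA.apps_two] using (hf 0).1 ![a', b']
  · simpa only [PCA.apps_two] using (hf 1).1 ![a', b']
  · simpa [PCA.apps_three, PCA.eval, PCA.apl, a, b, c, g, h] using (hf 0).2 ![a', b', c']
  · simpa [PCA.apps_three, PCA.eval, PCA.apl, a, b, c, g, h] using (hf 1).2 ![a', b', c']
end

section
/- Kleene's first algebra is a pca: with partial application on ℕ defined by e·n := the value of the partial recursive function with code e on input n (in Mathlib terms, (Denumerable.ofNat Nat.Partrec.Code e).eval n), there exist k, s ∈ ℕ such that for all a, b, c ∈ ℕ: k·a, s·a, and (s·a)·b are defined, (k·a)·b ≃ a, and ((s·a)·b)·c ≃ (a·c)·(b·c), where ≃ is Kleene equality of partial values (one side is defined iff the other is, with equal values). -/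
/-- Kleene application on ℕ: `e · n` is the value at `n` of the partial
recursive function coded by `e`. -/
def kapp (e n : ℕ) : Part ℕ := (Denumerable.ofNat Nat.Partrec.Code e).eval n

/-- Application of a possibly undefined value to a number. -/
def kapl (x : Part ℕ) (b : ℕ) : Part ℕ := x.bind fun a => kapp a b

/-!
Kleene application is itself partial recursive, so `(a, b, c) ↦ (a · c) · (b · c)` is partial
recursive in three variables. Hardwiring arguments into a program (the parameter theorem) is a
total computable operation on codes; applied twice, it turns a code of this function into an
element `s` such that `s · a` and `(s · a) · b` are always defined. Applied once to `(a, b) ↦ a`,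
it yields `k`.
-/

open Nat.Partrec (Code)

theorem kapp_encode (c : Code) (n : ℕ) : kapp (Encodable.encode c) n = c.eval n := by
  rw [kapp, Denumerable.ofNat_encode]

theorem kapl_some (a b : ℕ) : kapl (Part.some a) b = kapp a b :=
  Part.bind_some a _

theorem partrec₂_kapp : Partrec₂ kapp :=
  Code.eval_part.comp ((Computable.ofNat Code).comp Computable.fst) Computable.snd

theorem exists_computable_kapp_eq {α : Type*} [Primcodable α] {f : α → ℕ →. ℕ}
    (hf : Partrec₂ f) : ∃ g : α → ℕ, Computable g ∧ ∀ a n, kapp (g a) n = f a n := by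
  obtain ⟨c, hc⟩ := Code.exists_code.1 hf
  have eval_c (a : α) (n : ℕ) : c.eval (Nat.pair (Encodable.encode a) n) = f a n := by
    have pair_eq : Nat.pair (Encodable.encode a) n = Encodable.encode (a, n) := rfl
    simp only [hc, pair_eq, Encodable.encodek, Part.coe_some, Part.bind_some]
    exact Part.map_id' Encodable.encode_nat _
  refine ⟨fun a ↦ Encodable.encode (c.curry (Encodable.encode a)), ?_, fun a n ↦ ?_⟩
  · exact Computable.encode.comp
      (Code.primrec₂_curry.to_comp.comp (Computable.const c) Computable.encode)
  · rw [kapp_encode, Code.eval_curry, eval_c]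

theorem exists_kapp_eq_some {f : ℕ → ℕ} (hf : Computable f) :
    ∃ e, ∀ n, kapp e n = Part.some (f n) := by
  obtain ⟨g, -, hg⟩ := exists_computable_kapp_eq
    (f := fun (_ : Unit) n ↦ Part.some (f n)) (hf.partrec.comp Computable.snd)
  exact ⟨g (), hg ()⟩

theorem exists_kapp_curry₂ {f : ℕ → ℕ →. ℕ} (hf : Partrec₂ f) :
    ∃ (e : ℕ) (g : ℕ → ℕ), (∀ a, kapp e a = Part.some (g a)) ∧ ∀ a b, kapp (g a) b = f a b := by
  obtain ⟨g, g_computable, hg⟩ := exists_computable_kapp_eq hf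
  obtain ⟨e, he⟩ := exists_kapp_eq_some g_computable
  exact ⟨e, g, he, hg⟩

theorem exists_kapp_curry₃ {f : ℕ → ℕ → ℕ →. ℕ} (hf : Partrec₂ fun p : ℕ × ℕ ↦ f p.1 p.2) :
    ∃ (e : ℕ) (g : ℕ → ℕ) (h : ℕ → ℕ → ℕ), (∀ a, kapp e a = Part.some (g a)) ∧
      (∀ a b, kapp (g a) b = Part.some (h a b)) ∧ ∀ a b c, kapp (h a b) c = f a b c := by
  obtain ⟨h, h_computable, hh⟩ := exists_computable_kapp_eq hf
  obtain ⟨e, g, he, hg⟩ := exists_kapp_curry₂ h_computable.partrec.to₂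
  exact ⟨e, g, fun a b ↦ h (a, b), he, hg, fun a b ↦ hh (a, b)⟩

theorem partrec₂_bind_kapp_bind_kapp : Partrec₂ fun (p : ℕ × ℕ) (c : ℕ) ↦
    (kapp p.1 c).bind fun u ↦ (kapp p.2 c).bind fun v ↦ kapp u v := by
  have kapp_fst : Partrec fun q : (ℕ × ℕ) × ℕ ↦ kapp q.1.1 q.2 :=
    partrec₂_kapp.comp (Computable.fst.comp Computable.fst) Computable.snd
  have kapp_snd : Partrec fun q : (ℕ × ℕ) × ℕ ↦ kapp q.1.2 q.2 :=
    partrec₂_kapp.comp (Computable.snd.comp Computable.fst) Computable.snd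
  have kapp_values : Partrec₂ fun (r : ((ℕ × ℕ) × ℕ) × ℕ) (v : ℕ) ↦ kapp r.2 v :=
    partrec₂_kapp.comp (Computable.snd.comp Computable.fst) Computable.snd
  exact kapp_fst.bind ((kapp_snd.comp Computable.fst).bind kapp_values)

/-- **Kleene's first algebra is a pca**: there are codes `k, s ∈ ℕ` such that
for all `a, b, c ∈ ℕ`: `k·a`, `s·a` and `(s·a)·b` are defined,
`(k·a)·b ≃ a`, and `((s·a)·b)·c ≃ (a·c)·(b·c)`. -/
theorem kleene_first_algebra_pca :
    ∃ k s : ℕ,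
      (∀ a : ℕ, (kapp k a).Dom) ∧
      (∀ a : ℕ, (kapp s a).Dom) ∧
      (∀ a b : ℕ, (kapl (kapp s a) b).Dom) ∧
      (∀ a b : ℕ, kapl (kapp k a) b = Part.some a) ∧
      (∀ a b c : ℕ, kapl (kapl (kapp s a) b) c
        = (kapp a c).bind fun u => (kapp b c).bind fun v => kapp u v) := by
  obtain ⟨k, ka, kapp_k, kapp_ka⟩ := exists_kapp_curry₂
    (f := fun a _ ↦ Part.some a) Computable.fst.partrec
  obtain ⟨s, sa, sab, kapp_s, kapp_sa, kapp_sab⟩ := exists_kapp_curry₃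
    (f := fun a b c ↦ (kapp a c).bind fun u ↦ (kapp b c).bind fun v ↦ kapp u v)
    partrec₂_bind_kapp_bind_kapp
  refine ⟨k, s, fun a ↦ ?_, fun a ↦ ?_, fun a b ↦ ?_, fun a b ↦ ?_, fun a b c ↦ ?_⟩
  · simp only [kapp_k, Part.some_dom]
  · simp only [kapp_s, Part.some_dom]
  · simp only [kapp_s, kapl_some, kapp_sa, Part.some_dom]
  · rw [kapp_k, kapl_some, kapp_ka]
  · rw [kapp_s, kapl_some, kapp_sa, kapl_some, kapp_sab]
end

section
/- Let A be a pca. There exists an element i_r ∈ A such that for every x ∈ V(A): i_r = i_r ⊩ x = x. -/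
universe u

/-- The ZF-set coding the triple `⟨a, b, y⟩` (via an embedding `inj` of the
pca carrier into the sets). -/
def TripleName {A : Type} (inj : A → ZFSet) (a b : A) (y : ZFSet) : ZFSet :=
  ZFSet.pair (inj a) (ZFSet.pair (inj b) y)

/-- The realizability universe `V(A)`: a ZF-set is a name iff it is a set of
triples `⟨a, b, y⟩` with `a b : A` and `y` a name.  (For injective `inj` the
decomposition of a triple is unique, so the two clauses express exactly this.) -/
inductive IsName {A : Type} (inj : A → ZFSet) : ZFSet → Prop
  | mk (x : ZFSet)
      (htriple : ∀ z ∈ x, ∃ (a b : A) (y : ZFSet), z = TripleName inj a b y)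
      (hname : ∀ (a b : A) (y : ZFSet), TripleName inj a b y ∈ x → IsName inj y) :
      IsName inj x

/-- Extensional generic realizability for the atomic formulas, relative to
fixed projection combinators `p0`, `p1`:
`Realizes P p0 p1 inj true a b x y` means `a = b ⊩ x ∈ y`, and
`Realizes P p0 p1 inj false a b x y` means `a = b ⊩ x = y`.
Since the value of a partial application is unique when it exists, the pairs
of hypotheses `(h1def, h1)` and `(h2def, h2)` of the `eq` constructor express
exactly "for every ⟨c,d,z⟩ ∈ x, (ac)₀ = (bd)₀ ⊩ z ∈ y" (with all the
applications defined), and symmetrically for `y` with `p1`; the relation is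
well-founded in the rank of the names, hence this least fixed point is the
relation defined by transfinite recursion. -/
inductive Realizes {A : Type} (P : PCA A) (p0 p1 : A) (inj : A → ZFSet) :
    Bool → A → A → ZFSet → ZFSet → Prop
  | mem {a b : A} {x y : ZFSet} (a0 b0 a1 b1 : A) (z : ZFSet)
      (ha0 : a0 ∈ P.app p0 a) (hb0 : b0 ∈ P.app p0 b)
      (ha1 : a1 ∈ P.app p1 a) (hb1 : b1 ∈ P.app p1 b)
      (hz : TripleName inj a0 b0 z ∈ y)
      (he : Realizes P p0 p1 inj false a1 b1 x z) :
      Realizes P p0 p1 inj true a b x y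
  | eq {a b : A} {x y : ZFSet}
      (h1def : ∀ (c d : A) (z : ZFSet), TripleName inj c d z ∈ x →
        ∃ u v u0 v0 : A, u ∈ P.app a c ∧ v ∈ P.app b d ∧
          u0 ∈ P.app p0 u ∧ v0 ∈ P.app p0 v)
      (h1 : ∀ (c d : A) (z : ZFSet) (u v u0 v0 : A), TripleName inj c d z ∈ x →
        u ∈ P.app a c → v ∈ P.app b d → u0 ∈ P.app p0 u → v0 ∈ P.app p0 v →
        Realizes P p0 p1 inj true u0 v0 z y)
      (h2def : ∀ (c d : A) (z : ZFSet), TripleName inj c d z ∈ y →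
        ∃ u v u1 v1 : A, u ∈ P.app a c ∧ v ∈ P.app b d ∧
          u1 ∈ P.app p1 u ∧ v1 ∈ P.app p1 v)
      (h2 : ∀ (c d : A) (z : ZFSet) (u v u1 v1 : A), TripleName inj c d z ∈ y →
        u ∈ P.app a c → v ∈ P.app b d → u1 ∈ P.app p1 u → v1 ∈ P.app p1 v →
        Realizes P p0 p1 inj true u1 v1 z x) :
      Realizes P p0 p1 inj false a b x y

/-- `a = b ⊩ x = y`. -/
def RealEq {A : Type} (P : PCA A) (p0 p1 : A) (inj : A → ZFSet) (a b : A) (x y : ZFSet) : Prop :=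
  Realizes P p0 p1 inj false a b x y

/-- `a = b ⊩ x ∈ y`. -/
def RealMem {A : Type} (P : PCA A) (p0 p1 : A) (inj : A → ZFSet) (a b : A) (x y : ZFSet) : Prop :=
  Realizes P p0 p1 inj true a b x y

/-!
For `r` to realize reflexivity it suffices that it maps every `c` to a pair `(q, q)` with
`q = (c, r)`: for a triple `⟨c, d, z⟩ ∈ x`, the first component of `q` locates `z` in `x` and the
second realizes `z = z`, by induction on names. Such a self-referential `r`, with
`r c ≃ p (p c r) (p c r)`, exists by the recursion theorem for partial combinatory algebras, a
consequence of combinatory completeness.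
-/

namespace PCA

/-- Strict application of partial elements: `x y` is defined iff `x`, `y` and the application of
their values are. -/
def partApp {A : Type u} (P : PCA A) (x y : Part A) : Part A :=
  x.bind fun a => y.bind fun b => P.app a b

/-- Polynomials over `A` in the variables `0, …, n - 1`, built by application from variables and
constants. -/
inductive Term_s9 (A : Type u) (n : ℕ) : Type u
  | var (i : Fin n) : Term_s9 A n
  | const (a : A) : Term_s9 A n
  | app (t t' : Term_s9 A n) : Term_s9 A n

section CombinatoryCompleteness

variable {A : Type u} (P : PCA A) {n : ℕ}

@[simp]
theorem partApp_some_some (a b : A) : P.partApp (Part.some a) (Part.some b) = P.app a b := by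
  simp [partApp]

theorem partApp_k (a b : A) :
    P.partApp (P.partApp (Part.some P.k) (Part.some a)) (Part.some b) = Part.some a := by
  simpa [partApp] using P.k_spec a b

theorem partApp_s (a b c : A) :
    P.partApp (P.partApp (P.partApp (Part.some P.s) (Part.some a)) (Part.some b)) (Part.some c)
      = P.partApp (P.app a c) (P.app b c) := by
  simpa [partApp] using P.s_spec a b c

theorem partApp_s_dom (a b : A) :
    (P.partApp (P.partApp (Part.some P.s) (Part.some a)) (Part.some b)).Dom := by
  simpa [partApp] using P.s_app_def a b

theorem partApp_s_k_k (a : A) :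
    P.partApp (P.partApp (P.partApp (Part.some P.s) (Part.some P.k)) (Part.some P.k)) (Part.some a)
      = Part.some a := by
  obtain ⟨b, hb⟩ := Part.dom_iff_mem.1 (P.k_def a)
  have hkab := P.partApp_k a b
  rw [partApp_some_some, Part.eq_some_iff.2 hb] at hkab
  rw [partApp_s, Part.eq_some_iff.2 hb, hkab]

namespace Term_s9

/-- The value of a polynomial at `ρ`, undefined as soon as one of its subterms is. -/
def eval (ρ : Fin n → A) : Term_s9 A n → Part A
  | var i => Part.some (ρ i)
  | const a => Part.some a
  | app t t' => P.partApp (t.eval ρ) (t'.eval ρ)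

/-- Bracket abstraction of variable `0` from `t`, in the de Bruijn style: variable `i + 1` becomes
variable `i`. -/
def lam : Term_s9 A (n + 1) → Term_s9 A n
  | var i => Fin.cases (app (app (const P.s) (const P.k)) (const P.k)) (app (const P.k) ∘ var) i
  | const a => app (const P.k) (const a)
  | app t t' => app (app (const P.s) t.lam) t'.lam

theorem eval_lam_dom (t : Term_s9 A (n + 1)) (ρ : Fin n → A) : ((t.lam P).eval P ρ).Dom := by
  induction t with
  | var i =>
    cases i using Fin.cases with
    | zero => exact P.partApp_s_dom P.k P.k
    | succ i => simpa [lam, eval] using P.k_def (ρ i)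
  | const a => simpa [lam, eval] using P.k_def a
  | app t t' ih ih' =>
    obtain ⟨f, hf⟩ := Part.dom_iff_mem.1 ih
    obtain ⟨g, hg⟩ := Part.dom_iff_mem.1 ih'
    simpa only [lam, eval, Part.eq_some_iff.2 hf, Part.eq_some_iff.2 hg]
      using P.partApp_s_dom f g

theorem partApp_eval_lam (t : Term_s9 A (n + 1)) (ρ : Fin n → A) (a : A) :
    P.partApp ((t.lam P).eval P ρ) (Part.some a) = t.eval P (Fin.cons a ρ) := by
  induction t with
  | var i =>
    cases i using Fin.cases with
    | zero => exact P.partApp_s_k_k a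
    | succ i => simpa [lam, eval] using P.partApp_k (ρ i) a
  | const b => simpa [lam, eval] using P.partApp_k b a
  | app t t' ih ih' =>
    obtain ⟨f, hf⟩ := Part.dom_iff_mem.1 (eval_lam_dom P t ρ)
    obtain ⟨g, hg⟩ := Part.dom_iff_mem.1 (eval_lam_dom P t' ρ)
    rw [Part.eq_some_iff.2 hf, partApp_some_some] at ih
    rw [Part.eq_some_iff.2 hg, partApp_some_some] at ih'
    rw [lam, eval, eval, eval, eval, Part.eq_some_iff.2 hf, Part.eq_some_iff.2 hg, partApp_s,
      ih, ih']

theorem exists_app_eq_eval (t : Term_s9 A (n + 1)) (ρ : Fin n → A) :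
    ∃ e ∈ (t.lam P).eval P ρ, ∀ a, P.app e a = t.eval P (Fin.cons a ρ) := by
  obtain ⟨e, he⟩ := Part.dom_iff_mem.1 (eval_lam_dom P t ρ)
  refine ⟨e, he, fun a => ?_⟩
  rw [← partApp_eval_lam, Part.eq_some_iff.2 he, partApp_some_some]

theorem exists_app_app_eq_eval (t : Term_s9 A 2) :
    ∃ e : A, ∀ a, ∃ u ∈ P.app e a, ∀ b, P.app u b = t.eval P ![b, a] := by
  obtain ⟨e, -, he⟩ := exists_app_eq_eval P (t.lam P) ![]
  refine ⟨e, fun a => ?_⟩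
  rw [he]
  exact exists_app_eq_eval P t ![a]

theorem exists_app_eq_eval_self (t : Term_s9 A 2) :
    ∃ r : A, ∀ c, P.app r c = t.eval P ![c, r] := by
  obtain ⟨e, he⟩ := exists_app_app_eq_eval P t
  -- Diagonalize: with `w x c ≃ e (x x) c`, the fixed point is `r = w w`.
  obtain ⟨w, hw⟩ := exists_app_app_eq_eval P
    (app (app (const e) (app (var 1) (var 1))) (var 0))
  obtain ⟨r, hr, hrc⟩ := hw w
  obtain ⟨u, hu, huc⟩ := he r
  refine ⟨r, fun c => ?_⟩
  rw [hrc, ← huc]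
  simp [eval, Part.eq_some_iff.2 hr, Part.eq_some_iff.2 hu]

end Term_s9

end CombinatoryCompleteness

section Pairing

variable {A : Type u} (P : PCA A)

/-- `w` codes the pair `(a, b)`, that is `(w)₀ ≃ a` and `(w)₁ ≃ b` for the projections `p0`,
`p1`. -/
def IsPair (p0 p1 w a b : A) : Prop :=
  a ∈ P.app p0 w ∧ b ∈ P.app p1 w

/-- A sufficient, self-referential condition for `r` to realize reflexivity: `r c` codes `(q, q)`
for some `q` coding `(c, r)`. The repeated `q` serves the two inclusions in an equality. -/
def IsReflRealizer (p0 p1 r : A) : Prop :=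
  ∀ c, ∃ w ∈ P.app r c, ∃ q, P.IsPair p0 p1 w q q ∧ P.IsPair p0 p1 q c r

variable {P} {p p0 p1 : A}

theorem exists_apl_eq_some_isPair
    (hp0 : ∀ a b : A, ((P.apl (P.app p a) b).bind fun w => P.app p0 w) = Part.some a)
    (hp1 : ∀ a b : A, ((P.apl (P.app p a) b).bind fun w => P.app p1 w) = Part.some b)
    (a b : A) : ∃ w, P.apl (P.app p a) b = Part.some w ∧ P.IsPair p0 p1 w a b := by
  obtain ⟨w, hw, ha⟩ := Part.mem_bind_iff.1 (Part.eq_some_iff.1 (hp0 a b))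
  obtain ⟨w', hw', hb⟩ := Part.mem_bind_iff.1 (Part.eq_some_iff.1 (hp1 a b))
  obtain rfl := Part.mem_unique hw hw'
  exact ⟨w, Part.eq_some_iff.2 hw, ha, hb⟩

theorem exists_isReflRealizer
    (hp0 : ∀ a b : A, ((P.apl (P.app p a) b).bind fun w => P.app p0 w) = Part.some a)
    (hp1 : ∀ a b : A, ((P.apl (P.app p a) b).bind fun w => P.app p1 w) = Part.some b) :
    ∃ r, P.IsReflRealizer p0 p1 r := by
  let pair (t t' : Term_s9 A 2) : Term_s9 A 2 := .app (.app (.const p) t) t'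
  have eval_pair {t t' : Term_s9 A 2} {ρ : Fin 2 → A} {a b : A} (ht : t.eval P ρ = Part.some a)
      (ht' : t'.eval P ρ = Part.some b) : (pair t t').eval P ρ = P.apl (P.app p a) b := by
    simp [pair, Term_s9.eval, ht, ht', partApp, apl]
  let q : Term_s9 A 2 := pair (.var 0) (.var 1)
  obtain ⟨r, hr⟩ := Term_s9.exists_app_eq_eval_self P (pair q q)
  refine ⟨r, fun c => ?_⟩
  obtain ⟨v, hv, hv_pair⟩ := exists_apl_eq_some_isPair hp0 hp1 c r
  obtain ⟨w, hw, hw_pair⟩ := exists_apl_eq_some_isPair hp0 hp1 v v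
  have hq : q.eval P ![c, r] = Part.some v := (eval_pair rfl rfl).trans hv
  exact ⟨w, Part.eq_some_iff.1 (by rw [hr, eval_pair hq hq, hw]), v, hw_pair, hv_pair⟩

end Pairing

end PCA

section Realizability

variable {A : Type} {P : PCA A} {p0 p1 : A} {inj : A → ZFSet} {a b : A} {x y : ZFSet}

theorem RealMem.of_isPair {c d r r' : A} {z : ZFSet} (ha : P.IsPair p0 p1 a c r)
    (hb : P.IsPair p0 p1 b d r') (hz : TripleName inj c d z ∈ y)
    (h : RealEq P p0 p1 inj r r' x z) : RealMem P p0 p1 inj a b x y :=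
  .mem c d r r' z ha.1 hb.1 ha.2 hb.2 hz h

theorem RealEq.of_exists_realMem
    (hxy : ∀ c d z, TripleName inj c d z ∈ x → ∃ u ∈ P.app a c, ∃ v ∈ P.app b d,
      ∃ u0 ∈ P.app p0 u, ∃ v0 ∈ P.app p0 v, RealMem P p0 p1 inj u0 v0 z y)
    (hyx : ∀ c d z, TripleName inj c d z ∈ y → ∃ u ∈ P.app a c, ∃ v ∈ P.app b d,
      ∃ u1 ∈ P.app p1 u, ∃ v1 ∈ P.app p1 v, RealMem P p0 p1 inj u1 v1 z x) :
    RealEq P p0 p1 inj a b x y := by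
  refine Realizes.eq (fun c d z hz => ?_) (fun c d z u v u0 v0 hz hu hv hu0 hv0 => ?_)
    (fun c d z hz => ?_) (fun c d z u v u1 v1 hz hu hv hu1 hv1 => ?_)
  · obtain ⟨u, hu, v, hv, u0, hu0, v0, hv0, -⟩ := hxy c d z hz
    exact ⟨u, v, u0, v0, hu, hv, hu0, hv0⟩
  · obtain ⟨u', hu', v', hv', u0', hu0', v0', hv0', h⟩ := hxy c d z hz
    obtain rfl := Part.mem_unique hu hu'
    obtain rfl := Part.mem_unique hv hv'
    obtain rfl := Part.mem_unique hu0 hu0'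
    obtain rfl := Part.mem_unique hv0 hv0'
    exact h
  · obtain ⟨u, hu, v, hv, u1, hu1, v1, hv1, -⟩ := hyx c d z hz
    exact ⟨u, v, u1, v1, hu, hv, hu1, hv1⟩
  · obtain ⟨u', hu', v', hv', u1', hu1', v1', hv1', h⟩ := hyx c d z hz
    obtain rfl := Part.mem_unique hu hu'
    obtain rfl := Part.mem_unique hv hv'
    obtain rfl := Part.mem_unique hu1 hu1'
    obtain rfl := Part.mem_unique hv1 hv1'
    exact h

theorem PCA.IsReflRealizer.realEq_self (ha : P.IsReflRealizer p0 p1 a)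
    (hb : P.IsReflRealizer p0 p1 b) (hx : IsName inj x) : RealEq P p0 p1 inj a b x x := by
  induction hx with
  | mk x _ _ ih =>
    refine .of_exists_realMem (fun c d z hz => ?_) (fun c d z hz => ?_)
    all_goals
      obtain ⟨u, hu, q, huq, hq⟩ := ha c
      obtain ⟨v, hv, q', hvq', hq'⟩ := hb d
    · exact ⟨u, hu, v, hv, q, huq.1, q', hvq'.1, .of_isPair hq hq' hz (ih c d z hz)⟩
    · exact ⟨u, hu, v, hv, q, huq.2, q', hvq'.2, .of_isPair hq hq' hz (ih c d z hz)⟩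

end Realizability

/-- **Reflexivity of equality is realized**: there is `i_r ∈ A` with
`i_r = i_r ⊩ x = x` for every `x ∈ V(A)`. -/
theorem refl_realized {A : Type} (P : PCA A)
    (p p0 p1 : A)
    (hp : ∀ a b : A, (P.apl (P.app p a) b).Dom)
    (hp0 : ∀ a b : A, ((P.apl (P.app p a) b).bind fun w => P.app p0 w) = Part.some a)
    (hp1 : ∀ a b : A, ((P.apl (P.app p a) b).bind fun w => P.app p1 w) = Part.some b)
    (inj : A → ZFSet) (hinj : Function.Injective inj)
    :
    ∃ ir : A, ∀ x : ZFSet, IsName inj x → RealEq P p0 p1 inj ir ir x x := by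
  obtain ⟨r, hr⟩ := PCA.exists_isReflRealizer hp0 hp1
  exact ⟨r, fun _ hx => hr.realEq_self hr hx⟩
end

section
/- Absoluteness and uniqueness up to extensional equality: let A be a pca over ω and σ a finite type. For all a, b ∈ A_σ: (i) if there exist g, h ∈ A with g = h ⊩ ⟦a⟧_σ = ⟦b⟧_σ, then a =_σ b; and (ii) if a =_σ b, then ⟦a⟧_σ = ⟦b⟧_σ (literal equality of sets). -/
universe u

/-- A pca over ω: a pca with successor, predecessor and definition-by-cases
combinators for a system of numerals `n ↦ n̄`. -/
structure PCAOmega (A : Type u) extends PCA A where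
  succ : A
  pred : A
  d : A
  num : ℕ → A
  succ_spec : ∀ n : ℕ, app succ (num n) = Part.some (num (n + 1))
  pred_spec : ∀ n : ℕ, app pred (num (n + 1)) = Part.some (num n)
  d_eq : ∀ (n : ℕ) (a b : A),
    toPCA.apl (toPCA.apl (toPCA.apl (app d (num n)) (num n)) a) b = Part.some a
  d_ne : ∀ (n m : ℕ) (a b : A), n ≠ m →
    toPCA.apl (toPCA.apl (toPCA.apl (app d (num n)) (num m)) a) b = Part.some b

/-- Finite types, generated from the base type `o` by function types. -/
inductive FType : Type
  | o : FType
  | arrow : FType → FType → FType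

/-- The extensional equality relation `=_σ` at finite type `σ`:
`a =_o b` iff `a = b = n̄` for some `n`; `a =_{στ} b` iff for all `c =_σ d`,
`ac` and `bd` are defined and `ac =_τ bd`. -/
def PCAOmega.teq {A : Type u} (P : PCAOmega A) : FType → A → A → Prop
  | .o, a, b => ∃ n : ℕ, a = P.num n ∧ b = P.num n
  | .arrow σ τ, a, b => ∀ c d : A, P.teq σ c d →
      ∃ e f : A, e ∈ P.app a c ∧ f ∈ P.app b d ∧ P.teq τ e f

/-- The name `⟦n̄⟧_o = {⟨m̄,m̄,⟦m̄⟧_o⟩ : m < n}` of the natural number `n`. -/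
noncomputable def oInterp {A : Type} (P : PCAOmega A) (inj : A → ZFSet) : ℕ → ZFSet
  | n => ZFSet.range fun m : Fin n =>
      TripleName inj (P.num m.1) (P.num m.1) (oInterp P inj m.1)
  decreasing_by exact m.2

/-- The name `{x}• = {⟨0̄,0̄,x⟩}`. -/
noncomputable def vSingle {A : Type} (P : PCAOmega A) (inj : A → ZFSet) (x : ZFSet) : ZFSet :=
  {TripleName inj (P.num 0) (P.num 0) x}

/-- The name `{x, y}• = {⟨0̄,0̄,x⟩, ⟨1̄,1̄,y⟩}`. -/
noncomputable def vUPair {A : Type} (P : PCAOmega A) (inj : A → ZFSet) (x y : ZFSet) : ZFSet :=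
  {TripleName inj (P.num 0) (P.num 0) x, TripleName inj (P.num 1) (P.num 1) y}

/-- The name `⟨x, y⟩• = {⟨0̄,0̄,{x}•⟩, ⟨1̄,1̄,{x,y}•⟩}` of the ordered pair. -/
noncomputable def vOPair {A : Type} (P : PCAOmega A) (inj : A → ZFSet) (x y : ZFSet) : ZFSet :=
  {TripleName inj (P.num 0) (P.num 0) (vSingle P inj x),
   TripleName inj (P.num 1) (P.num 1) (vUPair P inj x y)}

/-- The name `⟦a⟧_σ` of an element `a ∈ A_σ`:
`⟦n̄⟧_o = {⟨m̄,m̄,⟦m̄⟧_o⟩ : m < n}` and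
`⟦a⟧_{στ} = {⟨c,d,⟨⟦c⟧_σ,⟦e⟧_τ⟩•⟩ : c =_σ d, ac ≃ e}`.
(On the base type, `Classical.epsilon` picks the unique `n` with `a = n̄`.) -/
noncomputable def interp {A : Type} (P : PCAOmega A) (inj : A → ZFSet) :
    FType → A → ZFSet
  | .o, a => oInterp P inj (Classical.epsilon fun n : ℕ => a = P.num n)
  | .arrow σ τ, a =>
      ZFSet.range fun w :
          {cde : A × A × A // P.teq σ cde.1 cde.2.1 ∧ cde.2.2 ∈ P.app a cde.1} =>
        TripleName inj w.1.1 w.1.2.1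
          (vOPair P inj (interp P inj σ w.1.1) (interp P inj τ w.1.2.2))

/-!
Since `=_σ` is symmetric and transitive, `=_σ`-equal elements contribute the same triples to their
names, which gives literal equality. Conversely, forgetting the realizers collapses a name to an
ordinary set, and a realized atomic formula holds of the collapses. The collapse of `⟦n̄⟧_o` is the
von Neumann ordinal `n`, and that of `⟦a⟧_{στ}` is the graph of the function which `a` induces on
collapses. So the collapse of `⟦a⟧_σ` determines `a` up to `=_σ`, by induction on `σ`.
-/

section ExtensionalEquality

variable {A : Type u} {P : PCAOmega A} {σ τ : FType} {a b c d e f : A}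

theorem PCAOmega.teq.symm (h : P.teq σ a b) : P.teq σ b a := by
  induction σ generalizing a b with
  | o =>
    obtain ⟨n, ha, hb⟩ := h
    exact ⟨n, hb, ha⟩
  | arrow σ τ ihσ ihτ =>
    intro c d hcd
    obtain ⟨e, f, he, hf, hef⟩ := h d c (ihσ hcd)
    exact ⟨f, e, hf, he, ihτ hef⟩

theorem PCAOmega.teq.trans (hab : P.teq σ a b) (hbc : P.teq σ b c) : P.teq σ a c := by
  induction σ generalizing a b c with
  | o =>
    obtain ⟨n, ha, hb⟩ := hab
    obtain ⟨m, hb', hc⟩ := hbc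
    exact ⟨n, ha, hc.trans (hb'.symm.trans hb)⟩
  | arrow σ τ ihσ ihτ =>
    intro x y hxy
    obtain ⟨e, f, he, hf, hef⟩ := hab x y hxy
    obtain ⟨f', g, hf', hg, hfg⟩ := hbc y y (ihσ hxy.symm hxy)
    obtain rfl := Part.mem_unique hf hf'
    exact ⟨e, g, he, hg, ihτ hef hfg⟩

theorem PCAOmega.teq.refl_left (h : P.teq σ a b) : P.teq σ a a :=
  h.trans h.symm

theorem PCAOmega.teq.of_mem_app (hab : P.teq (.arrow σ τ) a b) (hcd : P.teq σ c d)
    (he : e ∈ P.app a c) (hf : f ∈ P.app b d) : P.teq τ e f := by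
  obtain ⟨e', f', he', hf', h⟩ := hab c d hcd
  rwa [Part.mem_unique he he', Part.mem_unique hf hf']

end ExtensionalEquality

section Names

variable {A : Type} {P : PCAOmega A} {inj : A → ZFSet} {σ τ : FType} {a b : A} {z : ZFSet} {n : ℕ}

theorem mem_oInterp_iff :
    z ∈ oInterp P inj n ↔ ∃ m < n, TripleName inj (P.num m) (P.num m) (oInterp P inj m) = z := by
  rw [oInterp, ZFSet.mem_range, Fin.exists_iff]
  simp only [exists_prop]

theorem oInterp_zero : oInterp P inj 0 = ∅ := by
  ext z
  simp [mem_oInterp_iff]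

theorem oInterp_succ (n : ℕ) :
    oInterp P inj (n + 1) =
      insert (TripleName inj (P.num n) (P.num n) (oInterp P inj n)) (oInterp P inj n) := by
  ext z
  simp only [ZFSet.mem_insert_iff, mem_oInterp_iff, Nat.exists_lt_succ_right]
  rw [or_comm, eq_comm]

theorem exists_interp_o_eq (ha : P.teq .o a a) :
    ∃ n, a = P.num n ∧ interp P inj .o a = oInterp P inj n := by
  obtain ⟨n, hn, -⟩ := ha
  exact ⟨_, Classical.epsilon_spec (p := fun n : ℕ ↦ a = P.num n) ⟨n, hn⟩, rfl⟩

theorem mem_interp_arrow_iff :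
    z ∈ interp P inj (.arrow σ τ) a ↔ ∃ c d e, P.teq σ c d ∧ e ∈ P.app a c ∧
      z = TripleName inj c d (vOPair P inj (interp P inj σ c) (interp P inj τ e)) := by
  rw [interp, ZFSet.mem_range]
  constructor
  · rintro ⟨⟨⟨c, d, e⟩, hcd, he⟩, rfl⟩
    exact ⟨c, d, e, hcd, he, rfl⟩
  · rintro ⟨c, d, e, hcd, he, rfl⟩
    exact ⟨⟨⟨c, d, e⟩, hcd, he⟩, rfl⟩

theorem interp_arrow_subset (hab : P.teq (.arrow σ τ) a b)
    (hτ : ∀ e f, P.teq τ e f → interp P inj τ e = interp P inj τ f) :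
    interp P inj (.arrow σ τ) a ⊆ interp P inj (.arrow σ τ) b := by
  intro z hz
  obtain ⟨c, d, e, hcd, he, rfl⟩ := mem_interp_arrow_iff.1 hz
  obtain ⟨_, f, -, hf, -⟩ := hab c c hcd.refl_left
  have hef : P.teq τ e f := hab.of_mem_app hcd.refl_left he hf
  exact mem_interp_arrow_iff.2 ⟨c, d, f, hcd, hf, by rw [hτ e f hef]⟩

theorem interp_eq_of_teq (hab : P.teq σ a b) : interp P inj σ a = interp P inj σ b := by
  induction σ generalizing a b with
  | o =>
    obtain ⟨n, rfl, rfl⟩ := hab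
    rfl
  | arrow σ τ _ ihτ =>
    exact subset_antisymm (interp_arrow_subset hab fun _ _ ↦ ihτ)
      (interp_arrow_subset hab.symm fun _ _ ↦ ihτ)

end Names

section Collapse

open scoped ZFSet

variable {A : Type} {inj : A → ZFSet} {a b : A} {w x y z : ZFSet}

theorem tripleName_inj_right {c d : A} (h : TripleName inj a b y = TripleName inj c d z) :
    y = z :=
  (ZFSet.pair_inj.1 (ZFSet.pair_inj.1 h).2).2

/-- The set of third components of the triples in `x`. A triple is a nested Kuratowski pair, so its
third component lies four levels below `x`. -/
noncomputable def nameDomain (inj : A → ZFSet) (x : ZFSet) : ZFSet :=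
  ZFSet.sep (fun y ↦ ∃ a b, TripleName inj a b y ∈ x) (⋃₀ (⋃₀ (⋃₀ (⋃₀ x))))

theorem mem_nameDomain_iff : y ∈ nameDomain inj x ↔ ∃ a b, TripleName inj a b y ∈ x := by
  refine ⟨fun h ↦ (ZFSet.mem_sep.1 h).2, fun h ↦ ZFSet.mem_sep.2 ⟨?_, h⟩⟩
  have mem_sUnion_sUnion_of_pair_mem {u v t : ZFSet} (h : ZFSet.pair u v ∈ t) : v ∈ ⋃₀ (⋃₀ t) :=
    ZFSet.mem_sUnion_of_mem (ZFSet.mem_pair.2 (.inr rfl))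
      (ZFSet.mem_sUnion_of_mem (ZFSet.mem_pair.2 (.inr rfl)) h)
  obtain ⟨a, b, hy⟩ := h
  exact mem_sUnion_sUnion_of_pair_mem (mem_sUnion_sUnion_of_pair_mem hy)

theorem rank_lt_of_mem_nameDomain (h : y ∈ nameDomain inj x) : y.rank < x.rank :=
  calc y.rank < (⋃₀ (⋃₀ (⋃₀ (⋃₀ x)))).rank := ZFSet.rank_lt_of_mem (ZFSet.mem_sep.1 h).1
    _ ≤ x.rank := by iterate 4 grw [ZFSet.rank_sUnion_le]

/-- The set obtained from the name `x` by hereditarily forgetting the realizers. Elements of `x`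
which are not triples are ignored, so that the collapse is defined for every set. -/
noncomputable def collapse (inj : A → ZFSet) (x : ZFSet) : ZFSet :=
  ZFSet.range fun y : {y // y ∈ nameDomain inj x} ↦ collapse inj y.1
termination_by x.rank
decreasing_by exact rank_lt_of_mem_nameDomain y.2

theorem mem_collapse_iff :
    z ∈ collapse inj x ↔ ∃ a b y, TripleName inj a b y ∈ x ∧ collapse inj y = z := by
  rw [collapse, ZFSet.mem_range]
  constructor
  · rintro ⟨⟨y, hy⟩, rfl⟩
    obtain ⟨a, b, h⟩ := mem_nameDomain_iff.1 hy
    exact ⟨a, b, y, h, rfl⟩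
  · rintro ⟨a, b, y, h, rfl⟩
    exact ⟨⟨y, mem_nameDomain_iff.2 ⟨a, b, h⟩⟩, rfl⟩

theorem collapse_mem_collapse (h : TripleName inj a b y ∈ x) : collapse inj y ∈ collapse inj x :=
  mem_collapse_iff.2 ⟨a, b, y, h, rfl⟩

theorem collapse_subset
    (h : ∀ a b y, TripleName inj a b y ∈ x → collapse inj y ∈ w) : collapse inj x ⊆ w := by
  intro z hz
  obtain ⟨a, b, y, hy, rfl⟩ := mem_collapse_iff.1 hz
  exact h a b y hy

theorem collapse_empty : collapse inj ∅ = ∅ :=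
  (ZFSet.eq_empty _).2 fun z hz ↦ by simpa using mem_collapse_iff.1 hz

theorem collapse_insert (a b : A) (x y : ZFSet) :
    collapse inj (insert (TripleName inj a b x) y) = insert (collapse inj x) (collapse inj y) := by
  apply subset_antisymm
  · refine collapse_subset fun c d z hz ↦ ZFSet.mem_insert_iff.2 ?_
    rcases ZFSet.mem_insert_iff.1 hz with h | h
    · exact .inl (congrArg (collapse inj) (tripleName_inj_right h))
    · exact .inr (collapse_mem_collapse h)
  · intro z hz
    rcases ZFSet.mem_insert_iff.1 hz with rfl | h
    · exact collapse_mem_collapse (ZFSet.mem_insert _ _)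
    · obtain ⟨c, d, t, ht, rfl⟩ := mem_collapse_iff.1 h
      exact collapse_mem_collapse (ZFSet.mem_insert_of_mem _ ht)

theorem collapse_singleton (a b : A) (x : ZFSet) :
    collapse inj {TripleName inj a b x} = {collapse inj x} := by
  rw [← insert_empty_eq, collapse_insert, collapse_empty, insert_empty_eq]

theorem Realizes.holds_collapse {P : PCA A} {p0 p1 : A} {t : Bool}
    (h : Realizes P p0 p1 inj t a b x y) :
    match (generalizing := false) t with
    | true => collapse inj x ∈ collapse inj y
    | false => collapse inj x = collapse inj y := by
  induction h with
  | mem a0 b0 a1 b1 z _ _ _ _ hz _ ih => exact ih ▸ collapse_mem_collapse hz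
  | eq h1def _ h2def _ ih1 ih2 =>
    apply subset_antisymm
    · refine collapse_subset fun c d z hz ↦ ?_
      obtain ⟨u, v, u0, v0, hu, hv, hu0, hv0⟩ := h1def c d z hz
      exact ih1 c d z u v u0 v0 hz hu hv hu0 hv0
    · refine collapse_subset fun c d z hz ↦ ?_
      obtain ⟨u, v, u1, v1, hu, hv, hu1, hv1⟩ := h2def c d z hz
      exact ih2 c d z u v u1 v1 hz hu hv hu1 hv1

theorem RealEq.collapse_eq {P : PCA A} {p0 p1 : A} (h : RealEq P p0 p1 inj a b x y) :
    collapse inj x = collapse inj y :=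
  Realizes.holds_collapse h

end Collapse

section CollapseOfInterpretation

variable {A : Type} {P : PCAOmega A} {inj : A → ZFSet} {σ τ : FType} {a b : A} {z : ZFSet}

theorem collapse_vOPair (x y : ZFSet) :
    collapse inj (vOPair P inj x y) = ZFSet.pair (collapse inj x) (collapse inj y) := by
  simp only [vOPair, vSingle, vUPair, collapse_insert, collapse_singleton, ZFSet.pair]

theorem collapse_oInterp (n : ℕ) : collapse inj (oInterp P inj n) = (n : Ordinal).toZFSet := by
  induction n with
  | zero => rw [oInterp_zero, collapse_empty, Nat.cast_zero, Ordinal.toZFSet_zero]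
  | succ n ih => rw [oInterp_succ, collapse_insert, ih, Nat.cast_succ, Ordinal.toZFSet_add_one]

theorem mem_collapse_interp_arrow_iff :
    z ∈ collapse inj (interp P inj (.arrow σ τ) a) ↔ ∃ c e, P.teq σ c c ∧ e ∈ P.app a c ∧
      ZFSet.pair (collapse inj (interp P inj σ c)) (collapse inj (interp P inj τ e)) = z := by
  rw [mem_collapse_iff]
  constructor
  · rintro ⟨x, y, t, ht, rfl⟩
    obtain ⟨c, d, e, hcd, he, h⟩ := mem_interp_arrow_iff.1 ht
    exact ⟨c, e, hcd.refl_left, he, by rw [tripleName_inj_right h, collapse_vOPair]⟩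
  · rintro ⟨c, e, hc, he, rfl⟩
    exact ⟨c, c, _, mem_interp_arrow_iff.2 ⟨c, c, e, hc, he, rfl⟩, collapse_vOPair _ _⟩

theorem teq_of_collapse_interp_eq (ha : P.teq σ a a) (hb : P.teq σ b b)
    (h : collapse inj (interp P inj σ a) = collapse inj (interp P inj σ b)) : P.teq σ a b := by
  induction σ generalizing a b with
  | o =>
    obtain ⟨n, han, hn⟩ := exists_interp_o_eq (inj := inj) ha
    obtain ⟨m, hbm, hm⟩ := exists_interp_o_eq (inj := inj) hb
    rw [hn, hm, collapse_oInterp, collapse_oInterp] at h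
    have hnm : n = m := Nat.cast_injective (Ordinal.toZFSet_injective h)
    exact ⟨n, han, hnm ▸ hbm⟩
  | arrow σ τ ihσ ihτ =>
    intro c d hcd
    obtain ⟨e, -, he, -, -⟩ := ha c c hcd.refl_left
    obtain ⟨c', e', hc', he', hpair⟩ := mem_collapse_interp_arrow_iff.1
      (h ▸ mem_collapse_interp_arrow_iff.2 ⟨c, e, hcd.refl_left, he, rfl⟩)
    obtain ⟨hcol_c, hcol_e⟩ := ZFSet.pair_inj.1 hpair
    have hc'd : P.teq σ c' d := (ihσ hc' hcd.refl_left hcol_c).trans hcd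
    have hee' : P.teq τ e e' := (ihτ (hb.of_mem_app hc' he' he')
      (ha.of_mem_app hcd.refl_left he he) hcol_e).symm
    obtain ⟨-, f, -, hf, -⟩ := hb c' d hc'd
    exact ⟨e, f, he, hf, hee'.trans (hb.of_mem_app hc'd he' hf)⟩

end CollapseOfInterpretation

/-- **Absoluteness and uniqueness up to extensional equality**: for
`a, b ∈ A_σ`, (i) if some `g, h` realize `⟦a⟧_σ = ⟦b⟧_σ` then `a =_σ b`, and
(ii) if `a =_σ b` then `⟦a⟧_σ` and `⟦b⟧_σ` are literally the same set. -/
theorem interp_absolute_unique {A : Type} (P : PCAOmega A)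
    (p p0 p1 : A)
    (hp : ∀ a b : A, (P.toPCA.apl (P.app p a) b).Dom)
    (hp0 : ∀ a b : A, ((P.toPCA.apl (P.app p a) b).bind fun w => P.app p0 w) = Part.some a)
    (hp1 : ∀ a b : A, ((P.toPCA.apl (P.app p a) b).bind fun w => P.app p1 w) = Part.some b)
    (inj : A → ZFSet) (hinj : Function.Injective inj)
    (σ : FType) (a b : A) (ha : P.teq σ a a) (hb : P.teq σ b b) :
    ((∃ g h : A, RealEq P.toPCA p0 p1 inj g h (interp P inj σ a) (interp P inj σ b)) →
      P.teq σ a b) ∧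
    (P.teq σ a b → interp P inj σ a = interp P inj σ b) := by
  constructor
  · rintro ⟨g, h, hgh⟩
    exact teq_of_collapse_interp_eq ha hb hgh.collapse_eq
  · exact interp_eq_of_teq
end

section
/- Set induction is realized: let A be a pca. There exists an element e ∈ A such that for every assignment Φ of a set Φ(x) ⊆ A × A to each x ∈ V(A), and all a, b ∈ A, if for every x ∈ V(A) and all c, d ∈ A the following holds — whenever for every triple ⟨g,h,y⟩ ∈ x the applications cg and dh are defined with (cg, dh) ∈ Φ(y), then ac and bd are defined with (ac, bd) ∈ Φ(x) — then for every x ∈ V(A), ea and eb are defined and (ea, eb) ∈ Φ(x). -/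
universe u

/-!
Self-application yields `e` with `e a ≃ a (λ g. e a)`. Suppose `a = b` realizes the premise of set
induction. By induction on `x`, the constant functions `c = λ g. e a` and `d = λ g. e b` give
`(c g, d h) = (e a, e b) ∈ Φ y` for all `⟨g, h, y⟩ ∈ x`, hence `(e a, e b) = (a c, b d) ∈ Φ x`.
-/

namespace PCA

variable {A : Type u} (P : PCA A)

/-- The element `k a`. -/
def kApp (a : A) : A := (P.app P.k a).get (P.k_def a)

/-- The element `s a`. -/
def sApp (a : A) : A := (P.app P.s a).get (P.s_def a)

/-- The element `s a b`. -/
def sApp₂ (a b : A) : A := ((P.app P.s a).bind fun x => P.app x b).get (P.s_app_def a b)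

/-- The identity combinator `s k k`. -/
def i : A := P.sApp₂ P.k P.k

theorem app_k (a : A) : P.app P.k a = Part.some (P.kApp a) :=
  (Part.some_get _).symm

theorem app_s (a : A) : P.app P.s a = Part.some (P.sApp a) :=
  (Part.some_get _).symm

theorem app_kApp (a b : A) : P.app (P.kApp a) b = Part.some a := by
  simpa only [app_k, Part.bind_some] using P.k_spec a b

theorem app_app_s (a b : A) :
    ((P.app P.s a).bind fun x => P.app x b) = Part.some (P.sApp₂ a b) :=
  (Part.some_get _).symm

theorem app_sApp (a b : A) : P.app (P.sApp a) b = Part.some (P.sApp₂ a b) := by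
  simpa only [app_s, Part.bind_some] using P.app_app_s a b

theorem app_sApp₂ (a b c : A) :
    P.app (P.sApp₂ a b) c = (P.app a c).bind fun u => (P.app b c).bind fun v => P.app u v := by
  simpa only [app_app_s, Part.bind_some] using P.s_spec a b c

theorem app_i (a : A) : P.app P.i a = Part.some a := by
  simp only [i, app_sApp₂, app_k, Part.bind_some, app_kApp]

/-- A total function `f : A → A` is representable if some `e ∈ A` satisfies `e a ≃ f a` for all
`a`. -/
def Representable (f : A → A) : Prop :=
  ∃ e : A, ∀ a : A, P.app e a = Part.some (f a)

variable {P}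

theorem representable_kApp : P.Representable P.kApp :=
  ⟨P.k, P.app_k⟩

theorem representable_sApp : P.Representable P.sApp :=
  ⟨P.s, P.app_s⟩

theorem representable_const (c : A) : P.Representable fun _ => c :=
  ⟨P.kApp c, P.app_kApp c⟩

theorem Representable.comp {f g : A → A} (hf : P.Representable f) (hg : P.Representable g) :
    P.Representable fun a => f (g a) := by
  obtain ⟨p, hp⟩ := hf
  obtain ⟨q, hq⟩ := hg
  exact ⟨P.sApp₂ (P.kApp p) q, fun a => by simp only [app_sApp₂, app_kApp, hq, hp, Part.bind_some]⟩

theorem Representable.sApp₂ {f g : A → A} (hf : P.Representable f) (hg : P.Representable g) :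
    P.Representable fun a => P.sApp₂ (f a) (g a) := by
  obtain ⟨p, hp⟩ := representable_sApp.comp hf
  obtain ⟨q, hq⟩ := hg
  exact ⟨P.sApp₂ p q, fun a => by simp only [app_sApp₂, hp, hq, app_sApp, Part.bind_some]⟩

theorem Representable.exists_app_eq_apply_self {f : A → A} (hf : P.Representable f) :
    ∃ u : A, ∀ g : A, P.app u g = Part.some (f u) := by
  -- `s (k x) (k x)` is `λ g. x x`; `w` sends `x` to `f (λ g. x x)`, so that `u = λ g. w w` works.
  obtain ⟨w, hw⟩ := hf.comp (representable_kApp.sApp₂ representable_kApp)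
  exact ⟨P.sApp₂ (P.kApp w) (P.kApp w), fun g => by
    simp only [app_sApp₂, app_kApp, Part.bind_some, hw]⟩

variable (P)

/-- The element `λ a. a (s u (k a))`. When `u g ≃ e` for all `g`, its argument `s u (k a)` is the
constant function `λ g. e a`. -/
def applyToDelayed (u : A) : A := P.sApp₂ P.i (P.sApp₂ (P.kApp (P.sApp u)) P.k)

theorem app_applyToDelayed (u a : A) :
    P.app (P.applyToDelayed u) a = P.app a (P.sApp₂ u (P.kApp a)) := by
  simp only [applyToDelayed, app_sApp₂, app_i, app_kApp, app_k, app_sApp, Part.bind_some]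

theorem representable_applyToDelayed : P.Representable P.applyToDelayed :=
  (representable_const P.i).sApp₂
    ((representable_kApp.comp representable_sApp).sApp₂ (representable_const P.k))

theorem exists_app_eq_app_delayed :
    ∃ (e : A) (delayed : A → A), (∀ a, P.app e a = P.app a (delayed a)) ∧
      ∀ a g, P.app (delayed a) g = P.app e a := by
  obtain ⟨u, hu⟩ := P.representable_applyToDelayed.exists_app_eq_apply_self
  refine ⟨P.applyToDelayed u, fun a => P.sApp₂ u (P.kApp a), P.app_applyToDelayed u, fun a g => ?_⟩
  simp only [app_sApp₂, hu, app_kApp, Part.bind_some]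

end PCA

theorem IsName.of_tripleName_mem {A : Type} {inj : A → ZFSet} {x y : ZFSet} {a b : A}
    (hx : IsName inj x) (hy : TripleName inj a b y ∈ x) : IsName inj y := by
  cases hx with
  | mk _ _ hname => exact hname a b y hy

theorem wellFounded_tripleName_mem {A : Type} (inj : A → ZFSet) :
    WellFounded fun y x : {x : ZFSet // IsName inj x} =>
      ∃ a b : A, TripleName inj a b y ∈ (x : ZFSet) := by
  refine ⟨fun ⟨x, hx⟩ => ?_⟩
  induction hx with
  | mk x _ _ ih => exact ⟨_, fun ⟨y, _⟩ ⟨a, b, hy⟩ => ih a b y hy⟩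

/-- `R g h y x` plays the role of `⟨g, h, y⟩ ∈ x`. -/
theorem set_induction_realized_general {A : Type u} (P : PCA A) :
    ∃ e : A, ∀ {V : Type*} {R : A → A → V → V → Prop},
      (WellFounded fun y x => ∃ g h : A, R g h y x) →
      ∀ (Φ : V → Set (A × A)) (a b : A),
      (∀ (x : V) (c d : A),
        (∀ (g h : A) (y : V), R g h y x →
          ∃ cg dh : A, cg ∈ P.app c g ∧ dh ∈ P.app d h ∧ (cg, dh) ∈ Φ y) →
        ∃ ac bd : A, ac ∈ P.app a c ∧ bd ∈ P.app b d ∧ (ac, bd) ∈ Φ x) →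
      ∀ x : V, ∃ u v : A, u ∈ P.app e a ∧ v ∈ P.app e b ∧ (u, v) ∈ Φ x := by
  obtain ⟨e, delayed, he, hdelayed⟩ := P.exists_app_eq_app_delayed
  refine ⟨e, fun {V R} hR Φ a b hstep x => ?_⟩
  induction x using hR.induction with
  | _ x ih =>
    rw [he a, he b]
    refine hstep x (delayed a) (delayed b) fun g h y hy => ?_
    rw [hdelayed, hdelayed]
    exact ih y ⟨g, h, hy⟩

/-- **Set induction is realized**: there is `e ∈ A` such that for every
abstract realizability assignment `Φ` (assigning to each name the set of pairs
of realizers of `φ` at that name) and all `a, b ∈ A`: if `a = b` realizes the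
premise `∀x (∀y ∈ x φ(y) → φ(x))`, then for every `x ∈ V(A)`, `ea` and `eb`
are defined and `(ea, eb) ∈ Φ(x)`. -/
theorem set_induction_realized {A : Type} (P : PCA A)
    (inj : A → ZFSet) (hinj : Function.Injective inj) :
    ∃ e : A, ∀ (Φ : ZFSet → Set (A × A)) (a b : A),
      (∀ x : ZFSet, IsName inj x → ∀ c d : A,
        (∀ (g h : A) (y : ZFSet), TripleName inj g h y ∈ x →
          ∃ cg dh : A, cg ∈ P.app c g ∧ dh ∈ P.app d h ∧ (cg, dh) ∈ Φ y) →
        ∃ ac bd : A, ac ∈ P.app a c ∧ bd ∈ P.app b d ∧ (ac, bd) ∈ Φ x) →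
      ∀ x : ZFSet, IsName inj x →
        ∃ u v : A, u ∈ P.app e a ∧ v ∈ P.app e b ∧ (u, v) ∈ Φ x := by
  obtain ⟨e, he⟩ := set_induction_realized_general P
  exact ⟨e, fun Φ a b hstep x hx => he (wellFounded_tripleName_mem inj) (fun y => Φ y) a b
    (fun x c d ih => hstep x x.2 c d fun g h y hy => ih g h ⟨y, x.2.of_tripleName_mem hy⟩ hy)
    ⟨x, hx⟩⟩
end
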